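/- If f : Λ(n)³ → ℤ satisfies the Duistermaat axioms, then for all Lagrangian planes L₁, L₂, L₃ one has f(L₁, L₂, L₃) = n_−(Ω) − n + dim(L₁ ∩ L₃), where Ω is the Hermitian form on L₁ ⊕ L₂ ⊕ L₃ defined by Ω(x₁,x₂,x₃; y₁,y₂,y₃) = ω(x₁,y₂) + ω(x₂,y₃) + ω(x₃,y₁) − ω(x₂,y₁) − ω(x₃,y₂) − ω(x₁,y₃). -/

import Mathlib

/-!
The three axioms determine `f`. Any three Lagrangian subspaces have a common Lagrangian
complement of the form `G_{tI}` with `t` real (`finite_bad`), so one symplectic map carries them to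
graphs `G_A`, `G_B`, `G_C` of Hermitian matrices (`exists_simultaneous_graphs`). Shears and the
normalization give `f(G_A, G_B, G_∞) = n₋(B - A)` (`f_graph_graph_vert`), and the cocycle property
with `L₄ = G_∞` yields `f(L₁, L₂, L₃) = n₋(B - A) - n₋(C - A) + n₋(C - B)`.

On the other side, in the graph coordinates `a, b, c` of the three subspaces and with `P = B - A`,
`Q = C - B`, `R = A - C`, the quadratic form of `Ω` satisfies
`2 Ω = P(a + b - c) + Q(b + c - a) + R(c + a - b)` because `P + Q + R = 0` (`polarization`). The
substitution is invertible, so `n₋(Ω) = n₋(B - A) + n₋(C - B) + n₋(A - C)`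
(`formNegIdx_tripleForm`). The formula follows from `L₁ ∩ L₃ ≅ ker (C - A)` and
`dim ker (C - A) + n₋(C - A) + n₋(A - C) = n`.

Negative indices are computed by diagonalizing the forms with the spectral theorem and counting
negative coefficients (`formNegIdx_eq_card`).
-/


open Matrix

/-- The Hermitian symplectic space `ℂⁿ ⊕ ℂⁿ`. -/
abbrev SympSpace (n : ℕ) := (Fin n → ℂ) × (Fin n → ℂ)

/-- The symplectic form `ω((x₁,x₂),(y₁,y₂)) = ⟨x₁,y₂⟩ − ⟨x₂,y₁⟩`. -/
noncomputable def omegaForm {n : ℕ} (u v : SympSpace n) : ℂ :=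
  star u.1 ⬝ᵥ v.2 - star u.2 ⬝ᵥ v.1

/-- A subspace is Lagrangian iff it coincides with its symplectic complement. -/
def IsLagrangian {n : ℕ} (L : Submodule ℂ (SympSpace n)) : Prop :=
  ∀ v, v ∈ L ↔ ∀ u ∈ L, omegaForm u v = 0

/-- The Lagrangian Grassmannian `Λ(n)`. -/
abbrev LagGr (n : ℕ) := {L : Submodule ℂ (SympSpace n) // IsLagrangian L}

/-- The graph `G_M = {(x, Mx)}` of a matrix `M`. -/
noncomputable def graphOf {n : ℕ} (M : Matrix (Fin n) (Fin n) ℂ) :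
    Submodule ℂ (SympSpace n) := LinearMap.graph M.mulVecLin

/-- The vertical subspace `G_∞ = 0 ⊕ ℂⁿ`. -/
noncomputable def vertSub (n : ℕ) : Submodule ℂ (SympSpace n) :=
  (⊥ : Submodule ℂ (Fin n → ℂ)).prod (⊤ : Submodule ℂ (Fin n → ℂ))

/-- The negative index (Morse index) of a sesquilinear form: the maximal dimension of a
subspace on which it is negative definite. -/
noncomputable def formNegIdx {V : Type*} [AddCommGroup V] [Module ℂ V]
    (Q : V → V → ℂ) : ℕ :=
  sSup {d : ℕ | ∃ W : Submodule ℂ V, Module.finrank ℂ W = d ∧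
    ∀ x ∈ W, x ≠ 0 → (Q x x).re < 0}

/-- The number of negative eigenvalues (Morse index) of a Hermitian matrix, as the
maximal dimension of a subspace on which the associated form is negative definite. -/
noncomputable def negIdxM {n : ℕ} (A : Matrix (Fin n) (Fin n) ℂ) : ℕ :=
  formNegIdx (fun x y : Fin n → ℂ => star x ⬝ᵥ A.mulVec y)

/-- A symplectic transformation: a bijective linear map preserving `ω`. -/
def IsSymplecticMap {n : ℕ} (S : SympSpace n ≃ₗ[ℂ] SympSpace n) : Prop :=
  ∀ u v, omegaForm (S u) (S v) = omegaForm u v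

/-- The Duistermaat axioms for `f : Λ(n)³ → ℤ`: normalization, symplectic invariance
and the cocycle property. -/
def SatisfiesDuiAxioms {n : ℕ} (f : LagGr n → LagGr n → LagGr n → ℤ) : Prop :=
  (∀ (A : Matrix (Fin n) (Fin n) ℂ), A.IsHermitian →
    ∀ L₁ L₂ L₃ : LagGr n,
      L₁.val = graphOf (0 : Matrix (Fin n) (Fin n) ℂ) →
      L₂.val = graphOf A → L₃.val = vertSub n →
      f L₁ L₂ L₃ = negIdxM A) ∧
  (∀ S : SympSpace n ≃ₗ[ℂ] SympSpace n, IsSymplecticMap S →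
    ∀ L₁ L₂ L₃ M₁ M₂ M₃ : LagGr n,
      M₁.val = (L₁.val).map S.toLinearMap →
      M₂.val = (L₂.val).map S.toLinearMap →
      M₃.val = (L₃.val).map S.toLinearMap →
      f M₁ M₂ M₃ = f L₁ L₂ L₃) ∧
  (∀ L₁ L₂ L₃ L₄ : LagGr n,
    f L₁ L₂ L₃ - f L₁ L₂ L₄ + f L₁ L₃ L₄ - f L₂ L₃ L₄ = 0)

/-- The Hermitian form `Ω` on the external direct sum `L₁ ⊕ L₂ ⊕ L₃`:
`Ω(x;y) = ω(x₁,y₂) + ω(x₂,y₃) + ω(x₃,y₁) − ω(x₂,y₁) − ω(x₃,y₂) − ω(x₁,y₃)`. -/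
noncomputable def tripleForm {n : ℕ} (L₁ L₂ L₃ : Submodule ℂ (SympSpace n))
    (x y : ↥L₁ × ↥L₂ × ↥L₃) : ℂ :=
  omegaForm (x.1 : SympSpace n) (y.2.1 : SympSpace n)
    + omegaForm (x.2.1 : SympSpace n) (y.2.2 : SympSpace n)
    + omegaForm (x.2.2 : SympSpace n) (y.1 : SympSpace n)
    - omegaForm (x.2.1 : SympSpace n) (y.1 : SympSpace n)
    - omegaForm (x.2.2 : SympSpace n) (y.2.1 : SympSpace n)
    - omegaForm (x.1 : SympSpace n) (y.2.2 : SympSpace n)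

/-! ### Negative index of a diagonalized form -/

/-- A form that reads `∑ i, d i * ‖eᵢ x‖²` in some linear coordinates `e` has negative index
equal to the number of negative coefficients `d i` (Sylvester's law of inertia). -/
lemma formNegIdx_eq_card {V : Type*} [AddCommGroup V] [Module ℂ V] {ι : Type*} [Fintype ι]
    (Q : V → V → ℂ) (e : V ≃ₗ[ℂ] (ι → ℂ)) (d : ι → ℝ)
    (h : ∀ x, (Q x x).re = ∑ i, d i * ‖e x i‖ ^ 2) :
    formNegIdx Q = (Finset.univ.filter (fun i => d i < 0)).card := by
  classical
  rw [← Fintype.card_subtype]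
  refine IsGreatest.csSup_eq ⟨?_, ?_⟩
  · let E : ({i // d i < 0} → ℂ) →ₗ[ℂ] (ι → ℂ) :=
      { toFun := fun y i => if hi : d i < 0 then y ⟨i, hi⟩ else 0
        map_add' := by
          intro x y; ext i; by_cases hi : d i < 0 <;> simp [hi]
        map_smul' := by
          intro c y; ext i; by_cases hi : d i < 0 <;> simp [hi] }
    have hE : ∀ y (i : {i // d i < 0}), E y i.1 = y i := fun y i => dif_pos i.2
    have hE0 : ∀ y i, ¬ d i < 0 → E y i = 0 := fun y i hi => dif_neg hi
    have hinj : Function.Injective (e.symm.toLinearMap ∘ₗ E) := by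
      intro x y hxy
      have h1 : E x = E y := e.symm.injective hxy
      ext i
      rw [← hE x, h1, hE y]
    refine ⟨LinearMap.range (e.symm.toLinearMap ∘ₗ E), ?_, ?_⟩
    · rw [LinearMap.finrank_range_of_inj hinj]; simp
    · rintro _ ⟨y, rfl⟩ hne
      rw [h]
      simp only [LinearMap.comp_apply, LinearEquiv.coe_coe, LinearEquiv.apply_symm_apply]
      have hy : y ≠ 0 := by rintro rfl; simp at hne
      obtain ⟨i, hi⟩ := Function.ne_iff.1 hy
      refine Finset.sum_neg' (fun j _ => ?_) ⟨i.1, Finset.mem_univ _, ?_⟩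
      · by_cases hj : d j < 0
        · exact mul_nonpos_of_nonpos_of_nonneg hj.le (by positivity)
        · simp [hE0 y j hj]
      · rw [hE]
        have : 0 < ‖y i‖ := norm_pos_iff.2 hi
        exact mul_neg_of_neg_of_pos i.2 (by positivity)
  · rintro k ⟨W, rfl, hW⟩
    let F : W →ₗ[ℂ] ({i // d i < 0} → ℂ) :=
      (LinearMap.funLeft ℂ ℂ (Subtype.val : {i // d i < 0} → ι)) ∘ₗ e.toLinearMap ∘ₗ W.subtype
    have hF : Function.Injective F := by
      rw [← LinearMap.ker_eq_bot, LinearMap.ker_eq_bot']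
      intro x hx
      by_contra hne
      have h1 := hW x.1 x.2 (by simpa using hne)
      rw [h] at h1
      refine absurd h1 (not_lt.2 (Finset.sum_nonneg fun i _ => ?_))
      by_cases hi : d i < 0
      · have : e x.1 i = 0 := congrFun hx ⟨i, hi⟩
        simp [this]
      · exact mul_nonneg (not_lt.1 hi) (by positivity)
    have := LinearMap.finrank_le_finrank_of_injective hF
    simpa using this

/-- The spectral theorem, phrased as diagonalization of the quadratic form of `A`. -/
lemma exists_diag {n : ℕ} {A : Matrix (Fin n) (Fin n) ℂ} (hA : A.IsHermitian) :
    ∃ (e : (Fin n → ℂ) ≃ₗ[ℂ] (Fin n → ℂ)) (d : Fin n → ℝ),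
      (∀ x, (star x ⬝ᵥ A *ᵥ x).re = ∑ i, d i * ‖e x i‖ ^ 2) ∧
      Module.finrank ℂ (LinearMap.ker A.mulVecLin) =
        (Finset.univ.filter (fun i => d i = 0)).card := by
  classical
  let U : Matrix (Fin n) (Fin n) ℂ := hA.eigenvectorUnitary.1
  have h1 : Uᴴ * U = 1 := Unitary.coe_star_mul_self hA.eigenvectorUnitary
  have h2 : U * Uᴴ = 1 := Unitary.coe_mul_star_self hA.eigenvectorUnitary
  have hs : A = U * diagonal (RCLike.ofReal ∘ hA.eigenvalues) * Uᴴ := by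
    conv_lhs => rw [hA.spectral_theorem, Unitary.conjStarAlgAut_apply]
    rfl
  refine ⟨Matrix.toLin'OfInv h2 h1, hA.eigenvalues, ?_, ?_⟩
  · intro x
    have h3 : star x ⬝ᵥ A *ᵥ x =
        star (Uᴴ *ᵥ x) ⬝ᵥ (diagonal (RCLike.ofReal ∘ hA.eigenvalues)) *ᵥ (Uᴴ *ᵥ x) := by
      conv_lhs => rw [hs]
      rw [star_mulVec, conjTranspose_conjTranspose, ← dotProduct_mulVec, mulVec_mulVec,
        mulVec_mulVec]
    rw [h3]
    simp only [dotProduct, mulVec_diagonal, Complex.re_sum]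
    refine Finset.sum_congr rfl fun i _ => ?_
    have : Matrix.toLin'OfInv h2 h1 x = Uᴴ *ᵥ x := rfl
    rw [this]
    generalize (Uᴴ *ᵥ x) = z
    rw [← Complex.normSq_eq_norm_sq]
    simp [Complex.normSq_apply]
    ring
  · have h3 := hA.rank_eq_card_non_zero_eigs
    have h4 := LinearMap.finrank_range_add_finrank_ker A.mulVecLin
    rw [← Matrix.rank, h3, Fintype.card_subtype] at h4
    have h5 := Finset.card_filter_add_card_filter_not (s := Finset.univ)
      (fun i => hA.eigenvalues i = 0)
    simp only [Module.finrank_fintype_fun_eq_card, Fintype.card_fin, Finset.card_univ,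
      ne_eq] at h4 h5
    omega

/-! ### Symplectic linear algebra -/

lemma star_mulVec_dotProduct {n : ℕ} {A : Matrix (Fin n) (Fin n) ℂ} (hA : A.IsHermitian)
    (x y : Fin n → ℂ) : star (A *ᵥ x) ⬝ᵥ y = star x ⬝ᵥ A *ᵥ y := by
  rw [star_mulVec, hA.eq, ← dotProduct_mulVec]

lemma mem_graphOf {n : ℕ} {A : Matrix (Fin n) (Fin n) ℂ} {v : SympSpace n} :
    v ∈ graphOf A ↔ v.2 = A *ᵥ v.1 := by
  simp [graphOf, LinearMap.mem_graph_iff]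

lemma mem_vertSub {n : ℕ} {v : SympSpace n} : v ∈ vertSub n ↔ v.1 = 0 := by
  simp [vertSub, Submodule.mem_prod]

/-- Symplectic maps send Lagrangian subspaces to Lagrangian subspaces. -/
lemma IsLagrangian.map {n : ℕ} {L : Submodule ℂ (SympSpace n)} (hL : IsLagrangian L)
    {S : SympSpace n ≃ₗ[ℂ] SympSpace n} (hS : IsSymplecticMap S) :
    IsLagrangian (L.map S.toLinearMap) := by
  intro v
  obtain ⟨w, rfl⟩ := S.surjective v
  have h1 : S w ∈ L.map S.toLinearMap ↔ w ∈ L := by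
    constructor
    · rintro ⟨u, hu, h⟩
      rwa [← S.injective h]
    · intro h
      exact ⟨w, h, rfl⟩
  rw [h1, hL w]
  constructor
  · rintro h _ ⟨u, hu, rfl⟩
    exact (hS u w).trans (h u hu)
  · intro h u hu
    rw [← hS u w]
    exact h _ ⟨u, hu, rfl⟩

open scoped ComplexOrder in
lemma isLagrangian_graphOf {n : ℕ} {A : Matrix (Fin n) (Fin n) ℂ} (hA : A.IsHermitian) :
    IsLagrangian (graphOf A) := by
  intro v
  rw [mem_graphOf]
  constructor
  · intro hv u hu
    rw [mem_graphOf] at hu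
    rw [omegaForm, hv, hu, star_mulVec_dotProduct hA, sub_self]
  · intro h
    have h1 : ∀ x : Fin n → ℂ, star x ⬝ᵥ (v.2 - A *ᵥ v.1) = 0 := by
      intro x
      have := h (x, A *ᵥ x) (mem_graphOf.2 rfl)
      rw [omegaForm] at this
      dsimp only at this
      rw [star_mulVec_dotProduct hA] at this
      rw [dotProduct_sub, this]
    exact sub_eq_zero.1 (dotProduct_star_self_eq_zero.1 (h1 _))

open scoped ComplexOrder in
lemma isLagrangian_vertSub (n : ℕ) : IsLagrangian (vertSub n) := by
  intro v
  rw [mem_vertSub]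
  constructor
  · intro hv u hu
    rw [mem_vertSub] at hu
    simp [omegaForm, hv, hu]
  · intro h
    have := h (0, v.1) (mem_vertSub.2 rfl)
    simp only [omegaForm, star_zero, zero_dotProduct, zero_sub, neg_eq_zero] at this
    exact dotProduct_star_self_eq_zero.1 this

/-- A Lagrangian subspace transversal to the vertical one is the graph of a Hermitian matrix.
The first projection is onto because a vector `c` orthogonal to its range gives
`(0, c) ∈ L ∩ G_∞`. -/
lemma exists_graph {n : ℕ} {L : Submodule ℂ (SympSpace n)} (hL : IsLagrangian L)
    (hv : ∀ v ∈ L, v.1 = 0 → v = 0) :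
    ∃ A : Matrix (Fin n) (Fin n) ℂ, A.IsHermitian ∧ L = graphOf A := by
  classical
  let p : L →ₗ[ℂ] (Fin n → ℂ) := LinearMap.fst ℂ _ _ ∘ₗ L.subtype
  have hinj : Function.Injective p := by
    rw [← LinearMap.ker_eq_bot, LinearMap.ker_eq_bot']
    intro x hx
    exact Subtype.ext (hv x.1 x.2 hx)
  have hsurj : Function.Surjective p := by
    rw [← LinearMap.range_eq_top]
    by_contra hne
    obtain ⟨φ, hφ, hle⟩ := Submodule.exists_le_ker_of_lt_top _ (lt_top_iff_ne_top.2 hne)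
    let c : Fin n → ℂ := fun i => star (φ (Pi.single i 1))
    have hc : ∀ x, star (φ x) = star x ⬝ᵥ c := by
      intro x
      rw [LinearMap.pi_apply_eq_sum_univ φ x]
      simp only [dotProduct, c, star_sum, smul_eq_mul, star_mul', Pi.star_apply]
      refine Finset.sum_congr rfl fun i _ => ?_
      congr 3
      ext j
      simp [Pi.single_apply, eq_comm]
    have hmem : ((0, c) : SympSpace n) ∈ L := by
      rw [hL]
      intro u hu
      have h1 : φ u.1 = 0 := hle ⟨⟨u, hu⟩, rfl⟩
      simp [omegaForm, ← hc, h1]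
    have h0 : c = 0 := congrArg Prod.snd (hv _ hmem rfl)
    apply hφ
    ext1 i
    ext
    have := congrFun h0 i
    simpa [c] using this
  let e : L ≃ₗ[ℂ] (Fin n → ℂ) := LinearEquiv.ofBijective p ⟨hinj, hsurj⟩
  let T : (Fin n → ℂ) →ₗ[ℂ] (Fin n → ℂ) :=
    LinearMap.snd ℂ _ _ ∘ₗ L.subtype ∘ₗ e.symm.toLinearMap
  have hT : ∀ x, (x, T x) ∈ L := by
    intro x
    have h1 : ((e.symm x : L) : SympSpace n).1 = x := e.apply_symm_apply x
    have h2 : ((e.symm x : L) : SympSpace n) = (x, T x) := Prod.ext h1 rfl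
    rw [← h2]
    exact (e.symm x).2
  have hA : ∀ x, (LinearMap.toMatrix' T) *ᵥ x = T x := by
    intro x
    rw [LinearMap.toMatrix'_mulVec]
  refine ⟨LinearMap.toMatrix' T, ?_, ?_⟩
  · ext i j
    have := (hL _).1 (hT (Pi.single j 1)) _ (hT (Pi.single i 1))
    simp only [omegaForm, ← hA] at this
    rw [sub_eq_zero] at this
    simpa using this.symm
  · ext v
    rw [mem_graphOf, hA]
    constructor
    · intro hvL
      have h1 := hv _ (L.sub_mem hvL (hT v.1)) (by simp)
      exact sub_eq_zero.1 (congrArg Prod.snd h1)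
    · intro h
      have := hT v.1
      rwa [← h] at this

/-- A Lagrangian subspace has nonzero intersection with only finitely many of the graphs
`G_{tI}`, `t ∈ ℝ`: if `(x, tx)`
and `(y, sy)` lie in `L` then `0 = (s - t)⟨x, y⟩`, so nonzero intersection vectors for different
parameters are orthogonal. -/
lemma finite_bad {n : ℕ} {L : Submodule ℂ (SympSpace n)} (hL : IsLagrangian L) :
    {t : ℝ | ∃ x : Fin n → ℂ, x ≠ 0 ∧ (x, (t : ℂ) • x) ∈ L}.Finite := by
  set B := {t : ℝ | ∃ x : Fin n → ℂ, x ≠ 0 ∧ (x, (t : ℂ) • x) ∈ L}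
  choose x hx0 hxL using fun t : B => t.2
  have hli : LinearIndependent ℂ (fun t : B =>
      (WithLp.toLp 2 (x t) : EuclideanSpace ℂ (Fin n))) := by
    refine linearIndependent_of_ne_zero_of_inner_eq_zero (fun t h => hx0 t ?_) ?_
    · simpa using h
    · intro s t hst
      have h1 := (hL _).1 (hxL t) _ (hxL s)
      simp only [omegaForm, star_smul, dotProduct_smul, smul_dotProduct, smul_eq_mul] at h1
      have h2 : ((t.1 : ℂ) - (s.1 : ℂ)) * (star (x s) ⬝ᵥ x t) = 0 := by
        rw [sub_mul]
        simpa using h1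
      have h3 : ((t.1 : ℂ) - (s.1 : ℂ)) ≠ 0 := by
        rw [sub_ne_zero]
        exact fun h => hst (Subtype.ext (Complex.ofReal_injective h).symm)
      have h4 := (mul_eq_zero.1 h2).resolve_left h3
      rw [EuclideanSpace.inner_eq_star_dotProduct, dotProduct_comm]
      exact h4
  have := hli.finite
  exact Set.toFinite B

/-- The shear `(x, y) ↦ (x, y - Ax)`. -/
noncomputable def shear {n : ℕ} (A : Matrix (Fin n) (Fin n) ℂ) :
    SympSpace n ≃ₗ[ℂ] SympSpace n where
  toFun v := (v.1, v.2 - A *ᵥ v.1)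
  invFun v := (v.1, v.2 + A *ᵥ v.1)
  map_add' u v := by
    ext i <;> simp [mulVec_add]; ring
  map_smul' c v := by
    ext i <;> simp [mulVec_smul]; ring
  left_inv v := by simp
  right_inv v := by simp

lemma shear_isSymplecticMap {n : ℕ} {A : Matrix (Fin n) (Fin n) ℂ} (hA : A.IsHermitian) :
    IsSymplecticMap (shear A) := by
  intro u v
  simp only [omegaForm, shear, LinearEquiv.coe_mk, LinearMap.coe_mk, AddHom.coe_mk, star_sub,
    dotProduct_sub, sub_dotProduct, star_mulVec_dotProduct hA]
  ring

/-- The rotation `(x, y) ↦ (y, -x)`. -/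
noncomputable def rot (n : ℕ) : SympSpace n ≃ₗ[ℂ] SympSpace n where
  toFun v := (v.2, -v.1)
  invFun v := (-v.2, v.1)
  map_add' u v := by
    ext i <;> simp; ring
  map_smul' c v := by
    ext i <;> simp
  left_inv v := by simp
  right_inv v := by simp

lemma rot_isSymplecticMap (n : ℕ) : IsSymplecticMap (rot n) := by
  intro u v
  simp only [omegaForm, rot, LinearEquiv.coe_mk, LinearMap.coe_mk, AddHom.coe_mk, star_neg,
    dotProduct_neg, neg_dotProduct]
  ring

/-- Three Lagrangian subspaces can be moved simultaneously, by one symplectic map, to graphs of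
Hermitian matrices: choose a real `t` with `G_{tI}` transversal to all three, and send `G_{tI}` to
`G_∞`. -/
lemma exists_simultaneous_graphs {n : ℕ} (L₁ L₂ L₃ : LagGr n) :
    ∃ S : SympSpace n ≃ₗ[ℂ] SympSpace n, IsSymplecticMap S ∧
      ∃ A B C : Matrix (Fin n) (Fin n) ℂ, A.IsHermitian ∧ B.IsHermitian ∧ C.IsHermitian ∧
        L₁.val.map S.toLinearMap = graphOf A ∧ L₂.val.map S.toLinearMap = graphOf B ∧
        L₃.val.map S.toLinearMap = graphOf C := by
  have hfin := ((finite_bad L₁.2).union (finite_bad L₂.2)).union (finite_bad L₃.2)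
  obtain ⟨t, ht⟩ := hfin.exists_notMem
  simp only [Set.mem_union, not_or] at ht
  obtain ⟨⟨ht1, ht2⟩, ht3⟩ := ht
  have hD : ((t : ℂ) • (1 : Matrix (Fin n) (Fin n) ℂ)).IsHermitian := by
    rw [Matrix.IsHermitian, conjTranspose_smul, conjTranspose_one]
    simp
  let S := (shear ((t : ℂ) • (1 : Matrix (Fin n) (Fin n) ℂ))).trans (rot n)
  have hS : IsSymplecticMap S := fun u v =>
    (rot_isSymplecticMap n _ _).trans (shear_isSymplecticMap hD u v)
  have key : ∀ L : LagGr n,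
      t ∉ {t : ℝ | ∃ x : Fin n → ℂ, x ≠ 0 ∧ (x, (t : ℂ) • x) ∈ L.val} →
      ∃ A : Matrix (Fin n) (Fin n) ℂ, A.IsHermitian ∧ L.val.map S.toLinearMap = graphOf A := by
    intro L hL
    refine exists_graph (L.2.map hS) ?_
    rintro _ ⟨v, hv, rfl⟩ h0
    have h1 : v.2 - ((t : ℂ) • (1 : Matrix (Fin n) (Fin n) ℂ)) *ᵥ v.1 = 0 := h0
    rw [smul_mulVec, one_mulVec, sub_eq_zero] at h1
    have h2 : v.1 = 0 := by
      by_contra hne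
      refine hL ⟨v.1, hne, ?_⟩
      rw [← h1]
      exact hv
    have h3 : v = 0 := Prod.ext h2 (by rw [h1, h2, smul_zero]; rfl)
    rw [h3, map_zero]
  obtain ⟨A, hA, hA'⟩ := key L₁ ht1
  obtain ⟨B, hB, hB'⟩ := key L₂ ht2
  obtain ⟨C, hC, hC'⟩ := key L₃ ht3
  exact ⟨S, hS, A, B, C, hA, hB, hC, hA', hB', hC'⟩

/-! ### The two sides of the formula on graphs -/

lemma map_shear_graphOf {n : ℕ} (A B : Matrix (Fin n) (Fin n) ℂ) :
    (graphOf B).map (shear A).toLinearMap = graphOf (B - A) := by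
  ext v
  rw [mem_graphOf]
  constructor
  · rintro ⟨u, hu, rfl⟩
    rw [SetLike.mem_coe, mem_graphOf] at hu
    simp [shear, hu, sub_mulVec]
  · intro h
    refine ⟨(v.1, B *ᵥ v.1), mem_graphOf.2 rfl, Prod.ext rfl ?_⟩
    rw [h, sub_mulVec]
    rfl

lemma map_shear_vertSub {n : ℕ} (A : Matrix (Fin n) (Fin n) ℂ) :
    (vertSub n).map (shear A).toLinearMap = vertSub n := by
  ext v
  rw [mem_vertSub]
  constructor
  · rintro ⟨u, hu, rfl⟩
    exact mem_vertSub.1 hu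
  · intro h
    refine ⟨v, mem_vertSub.2 h, Prod.ext rfl ?_⟩
    simp [shear, h]

lemma f_graph_graph_vert {n : ℕ} {f : LagGr n → LagGr n → LagGr n → ℤ}
    (hf : SatisfiesDuiAxioms f) {A B : Matrix (Fin n) (Fin n) ℂ} (hA : A.IsHermitian)
    (hB : B.IsHermitian) :
    f ⟨graphOf A, isLagrangian_graphOf hA⟩ ⟨graphOf B, isLagrangian_graphOf hB⟩
      ⟨vertSub n, isLagrangian_vertSub n⟩ = negIdxM (B - A) := by
  rw [← hf.1 (B - A) (hB.sub hA) ⟨graphOf 0, isLagrangian_graphOf isHermitian_zero⟩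
    ⟨graphOf (B - A), isLagrangian_graphOf (hB.sub hA)⟩
    ⟨vertSub n, isLagrangian_vertSub n⟩ rfl rfl rfl]
  symm
  refine hf.2.1 (shear A) (shear_isSymplecticMap hA) _ _ _ _ _ _ ?_ ?_ ?_
  · simp [map_shear_graphOf]
  · simp [map_shear_graphOf]
  · simp [map_shear_vertSub]

lemma negIdxM_eq {n : ℕ} {A : Matrix (Fin n) (Fin n) ℂ}
    {e : (Fin n → ℂ) ≃ₗ[ℂ] (Fin n → ℂ)} {d : Fin n → ℝ}
    (h : ∀ x, (star x ⬝ᵥ A *ᵥ x).re = ∑ i, d i * ‖e x i‖ ^ 2) :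
    negIdxM A = (Finset.univ.filter (fun i => d i < 0)).card :=
  formNegIdx_eq_card _ e d h

/-- `dim ker D + n₋(D) + n₋(-D) = n`. -/
lemma finrank_ker_add_negIdxM {n : ℕ} {D : Matrix (Fin n) (Fin n) ℂ} (hD : D.IsHermitian) :
    Module.finrank ℂ (LinearMap.ker D.mulVecLin) + negIdxM D + negIdxM (-D) = n := by
  obtain ⟨e, d, h, hk⟩ := exists_diag hD
  have h' : ∀ x, (star x ⬝ᵥ (-D) *ᵥ x).re = ∑ i, (-d i) * ‖e x i‖ ^ 2 := by
    intro x
    simp [neg_mulVec, h, Finset.sum_neg_distrib]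
  rw [hk, negIdxM_eq h, negIdxM_eq h']
  have hn : n = ∑ i : Fin n, 1 := by simp
  conv_rhs => rw [hn]
  simp only [Finset.card_filter, ← Finset.sum_add_distrib]
  refine Finset.sum_congr rfl fun i _ => ?_
  rcases lt_trichotomy (d i) 0 with h | h | h
  · simp [h, h.ne, h.le]
  · simp [h]
  · simp [h, h.ne', h.le]

/-- The invertible substitution `(a, b, c) ↦ (a + b - c, b + c - a, c + a - b)`. -/
noncomputable def mix (V : Type*) [AddCommGroup V] [Module ℂ V] :
    (V × V × V) ≃ₗ[ℂ] (V × V × V) where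
  toFun v := (v.1 + v.2.1 - v.2.2, v.2.1 + v.2.2 - v.1, v.2.2 + v.1 - v.2.1)
  invFun v := ((1 / 2 : ℂ) • (v.1 + v.2.2), (1 / 2 : ℂ) • (v.1 + v.2.1),
    (1 / 2 : ℂ) • (v.2.1 + v.2.2))
  map_add' u v := by
    ext <;> simp <;> abel
  map_smul' c v := by
    ext <;> simp [smul_add, smul_sub]
  left_inv v := by
    ext <;> simp <;> module
  right_inv v := by
    ext <;> simp <;> module

/-- If `P + Q + R = 0`, as for `P = B - A`, `Q = C - B`, `R = A - C`, the form
`⟨a, Pb⟩ + ⟨b, Qc⟩ + ⟨c, Ra⟩ + ⟨b, Pa⟩ + ⟨c, Qb⟩ + ⟨a, Rc⟩` is half the orthogonal sum of `P`, `Q`, `R` evaluated at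
`a + b - c`, `b + c - a`, `c + a - b`. -/
lemma polarization {n : ℕ} {P Q R : Matrix (Fin n) (Fin n) ℂ}
    (hsum : P + Q + R = 0) (a b c : Fin n → ℂ) :
    2 * (star a ⬝ᵥ P *ᵥ b + star b ⬝ᵥ Q *ᵥ c + star c ⬝ᵥ R *ᵥ a
      + star b ⬝ᵥ P *ᵥ a + star c ⬝ᵥ Q *ᵥ b + star a ⬝ᵥ R *ᵥ c) =
    star (a + b - c) ⬝ᵥ P *ᵥ (a + b - c) + star (b + c - a) ⬝ᵥ Q *ᵥ (b + c - a)
      + star (c + a - b) ⬝ᵥ R *ᵥ (c + a - b) := by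
  obtain rfl : R = -P - Q := by
    rw [eq_comm, ← sub_eq_zero, ← neg_eq_zero, ← hsum]
    abel
  simp only [star_add, star_sub, add_dotProduct, sub_dotProduct, mulVec_add, mulVec_sub,
    dotProduct_add, dotProduct_sub, sub_mulVec, neg_mulVec, dotProduct_neg]
  ring

/-- `n₋(Ω) = n₋(B - A) + n₋(C - B) + n₋(A - C)` when one symplectic map carries the three
subspaces to the graphs of `A`, `B`, `C`. -/
lemma formNegIdx_tripleForm {n : ℕ} {L₁ L₂ L₃ : Submodule ℂ (SympSpace n)}
    {S : SympSpace n ≃ₗ[ℂ] SympSpace n} (hS : IsSymplecticMap S)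
    {A B C : Matrix (Fin n) (Fin n) ℂ} (hA : A.IsHermitian) (hB : B.IsHermitian)
    (hC : C.IsHermitian) (h₁ : L₁.map S.toLinearMap = graphOf A)
    (h₂ : L₂.map S.toLinearMap = graphOf B) (h₃ : L₃.map S.toLinearMap = graphOf C) :
    formNegIdx (tripleForm L₁ L₂ L₃) =
      negIdxM (B - A) + (negIdxM (C - B) + negIdxM (A - C)) := by
  -- Each subspace is parametrized by the first component of its image under `S`.
  have key : ∀ (L : Submodule ℂ (SympSpace n)) (M : Matrix (Fin n) (Fin n) ℂ),
      L.map S.toLinearMap = graphOf M →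
      ∃ e : L ≃ₗ[ℂ] (Fin n → ℂ), ∀ u : L, S u = (e u, M *ᵥ e u) := by
    intro L M h
    have hm : ∀ u : L, (S u).2 = M *ᵥ (S u).1 := fun u =>
      mem_graphOf.1 (h ▸ ⟨u, u.2, rfl⟩)
    let p : L →ₗ[ℂ] (Fin n → ℂ) := LinearMap.fst ℂ _ _ ∘ₗ S.toLinearMap ∘ₗ L.subtype
    have hp : ∀ u : L, p u = (S u).1 := fun u => rfl
    refine ⟨LinearEquiv.ofBijective p ⟨?_, ?_⟩, fun u => Prod.ext rfl (hm u)⟩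
    · intro u v huv
      rw [hp, hp] at huv
      exact Subtype.ext (S.injective (Prod.ext huv (by rw [hm, hm, huv])))
    · intro x
      have : ((x, M *ᵥ x) : SympSpace n) ∈ L.map S.toLinearMap := by
        rw [h]; exact mem_graphOf.2 rfl
      obtain ⟨u, hu, hux⟩ := this
      exact ⟨⟨u, hu⟩, congrArg Prod.fst hux⟩
  obtain ⟨e₁, he₁⟩ := key L₁ A h₁
  obtain ⟨e₂, he₂⟩ := key L₂ B h₂
  obtain ⟨e₃, he₃⟩ := key L₃ C h₃
  obtain ⟨eP, dP, hP, -⟩ := exists_diag (hB.sub hA)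
  obtain ⟨eQ, dQ, hQ, -⟩ := exists_diag (hC.sub hB)
  obtain ⟨eR, dR, hR, -⟩ := exists_diag (hA.sub hC)
  have hω : ∀ {M N : Matrix (Fin n) (Fin n) ℂ}, M.IsHermitian → ∀ x y : Fin n → ℂ,
      omegaForm (x, M *ᵥ x) (y, N *ᵥ y) = star x ⬝ᵥ (N - M) *ᵥ y := by
    intro M N hM x y
    simp only [omegaForm, star_mulVec_dotProduct hM, sub_mulVec, dotProduct_sub]
  let E : (L₁ × L₂ × L₃) ≃ₗ[ℂ] (Fin n ⊕ (Fin n ⊕ Fin n) → ℂ) :=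
    (e₁.prodCongr (e₂.prodCongr e₃)).trans <| (mix (Fin n → ℂ)).trans <|
    (eP.prodCongr (eQ.prodCongr eR)).trans <|
    ((LinearEquiv.refl ℂ (Fin n → ℂ)).prodCongr
      (LinearEquiv.sumArrowLequivProdArrow (Fin n) (Fin n) ℂ ℂ).symm).trans
    (LinearEquiv.sumArrowLequivProdArrow (Fin n) (Fin n ⊕ Fin n) ℂ ℂ).symm
  rw [negIdxM_eq hP, negIdxM_eq hQ, negIdxM_eq hR]
  rw [formNegIdx_eq_card (tripleForm L₁ L₂ L₃) E
    (fun i => Sum.elim dP (Sum.elim dQ dR) i / 2)]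
  · simp only [Finset.card_filter, Fintype.sum_sum_type, Sum.elim_inl, Sum.elim_inr,
      div_neg_iff]
    norm_num
  · rintro ⟨x₁, x₂, x₃⟩
    have hpol := polarization (P := B - A) (Q := C - B) (R := A - C) (by abel)
      (e₁ x₁) (e₂ x₂) (e₃ x₃)
    have hΩ : tripleForm L₁ L₂ L₃ (x₁, x₂, x₃) (x₁, x₂, x₃) =
        star (e₁ x₁) ⬝ᵥ (B - A) *ᵥ (e₂ x₂) + star (e₂ x₂) ⬝ᵥ (C - B) *ᵥ (e₃ x₃)
        + star (e₃ x₃) ⬝ᵥ (A - C) *ᵥ (e₁ x₁) + star (e₂ x₂) ⬝ᵥ (B - A) *ᵥ (e₁ x₁)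
        + star (e₃ x₃) ⬝ᵥ (C - B) *ᵥ (e₂ x₂) + star (e₁ x₁) ⬝ᵥ (A - C) *ᵥ (e₃ x₃) := by
      simp only [tripleForm]
      simp only [← hS (x₁ : SympSpace n), ← hS (x₂ : SympSpace n), ← hS (x₃ : SympSpace n),
        he₁, he₂, he₃, hω hA, hω hB, hω hC]
      simp only [sub_mulVec, dotProduct_sub]
      ring
    rw [← hΩ] at hpol
    have hre := congrArg Complex.re hpol
    simp only [Complex.add_re, hP, hQ, hR, Complex.mul_re, Complex.re_ofNat, Complex.im_ofNat,
      zero_mul, sub_zero] at hre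
    rw [Fintype.sum_sum_type, Fintype.sum_sum_type]
    simp only [Sum.elim_inl, Sum.elim_inr, div_mul_eq_mul_div, ← Finset.sum_div]
    have hE1 : ∀ i, E (x₁, x₂, x₃) (Sum.inl i) = eP (e₁ x₁ + e₂ x₂ - e₃ x₃) i := fun i => rfl
    have hE2 : ∀ i, E (x₁, x₂, x₃) (Sum.inr (Sum.inl i)) = eQ (e₂ x₂ + e₃ x₃ - e₁ x₁) i :=
      fun i => rfl
    have hE3 : ∀ i, E (x₁, x₂, x₃) (Sum.inr (Sum.inr i)) = eR (e₃ x₃ + e₁ x₁ - e₂ x₂) i :=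
      fun i => rfl
    simp only [hE1, hE2, hE3]
    linarith

lemma finrank_graph_inf_graph {n : ℕ} (A C : Matrix (Fin n) (Fin n) ℂ) :
    Module.finrank ℂ ↥(graphOf A ⊓ graphOf C) =
      Module.finrank ℂ (LinearMap.ker (C - A).mulVecLin) := by
  let g : (Fin n → ℂ) →ₗ[ℂ] SympSpace n := LinearMap.prod LinearMap.id A.mulVecLin
  have hg : Function.Injective g := fun x y h => congrArg Prod.fst h
  have hmap : graphOf A ⊓ graphOf C = (LinearMap.ker (C - A).mulVecLin).map g := by
    ext v
    rw [Submodule.mem_inf, mem_graphOf, mem_graphOf]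
    constructor
    · rintro ⟨h1, h2⟩
      refine ⟨v.1, ?_, Prod.ext rfl h1.symm⟩
      simp [← h1, ← h2]
    · rintro ⟨x, hx, rfl⟩
      have hx' : C *ᵥ x - A *ᵥ x = 0 := by simpa [sub_mulVec] using hx
      exact ⟨rfl, (sub_eq_zero.1 hx').symm⟩
  rw [hmap]
  exact (Submodule.equivMapOfInjective g hg _).finrank_eq.symm

/-- If `f` satisfies the Duistermaat axioms then
`f(L₁,L₂,L₃) = n₋(Ω) − n + dim(L₁ ∩ L₃)`. -/
theorem duistermaat_index_eq_formNegIdx (n : ℕ) (hn : 1 ≤ n)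
    (f : LagGr n → LagGr n → LagGr n → ℤ) (hf : SatisfiesDuiAxioms f)
    (L₁ L₂ L₃ : LagGr n) :
    f L₁ L₂ L₃ = (formNegIdx (tripleForm L₁.val L₂.val L₃.val) : ℤ) - n
      + Module.finrank ℂ ↥(L₁.val ⊓ L₃.val) := by
  obtain ⟨S, hS, A, B, C, hA, hB, hC, h₁, h₂, h₃⟩ := exists_simultaneous_graphs L₁ L₂ L₃
  have hinv : f ⟨graphOf A, isLagrangian_graphOf hA⟩ ⟨graphOf B, isLagrangian_graphOf hB⟩
      ⟨graphOf C, isLagrangian_graphOf hC⟩ = f L₁ L₂ L₃ :=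
    hf.2.1 S hS _ _ _ _ _ _ h₁.symm h₂.symm h₃.symm
  have hco := hf.2.2 ⟨graphOf A, isLagrangian_graphOf hA⟩ ⟨graphOf B, isLagrangian_graphOf hB⟩
    ⟨graphOf C, isLagrangian_graphOf hC⟩ ⟨vertSub n, isLagrangian_vertSub n⟩
  rw [f_graph_graph_vert hf hA hB, f_graph_graph_vert hf hA hC, f_graph_graph_vert hf hB hC,
    hinv] at hco
  have hdim : Module.finrank ℂ ↥(L₁.val ⊓ L₃.val) =
      Module.finrank ℂ (LinearMap.ker (C - A).mulVecLin) := by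
    rw [← LinearEquiv.finrank_map_eq S (L₁.val ⊓ L₃.val), ← finrank_graph_inf_graph, ← h₁, ← h₃,
      ← Submodule.map_inf _ S.injective]
  have hker := finrank_ker_add_negIdxM (hC.sub hA)
  rw [neg_sub] at hker
  rw [formNegIdx_tripleForm hS hA hB hC h₁ h₂ h₃, hdim]
  push_cast
  omega
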